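/- arXiv:1202.0874 — 2 statements merged into one kernel-verified Lean document; each statement's English description precedes it below -/
import Mathlib

section
/- Let p and q be positive integers and let s be a real number with s > 1. Then T(p,s,q;−1,−1) = 2(−1)^p Σ_{k=0}^{⌊p/2⌋} φ(2k) C(p+q−1−2k, q−1) φ(s+p+q−2k) + 2(−1)^p Σ_{k=0}^{⌊q/2⌋} φ(2k) C(p+q−1−2k, p−1) ζ(s+p+q−2k), where C(n,k) denotes the binomial coefficient. -/
open Complex Finset

/-- `φ(s) = (2^{1-s} - 1) ζ(s)`. -/
noncomputable def phi (s : ℂ) : ℂ := ((2 : ℂ) ^ ((1 : ℂ) - s) - 1) * riemannZeta s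

/-- `T(p,s,q;x,y) = Σ_{l ≠ 0, m ≥ 1, l+m ≠ 0} x^l y^m / (l^p m^s (l+m)^q)`. -/
noncomputable def T (p : ℕ) (s : ℂ) (q : ℕ) (x y : ℂ) : ℂ :=
  ∑' lm : ℤ × ℕ,
    if lm.1 ≠ 0 ∧ lm.1 + ((lm.2 : ℤ) + 1) ≠ 0 then
      x ^ lm.1 * y ^ (lm.2 + 1) /
        ((lm.1 : ℂ) ^ p * (((lm.2 + 1 : ℕ) : ℂ)) ^ s *
          (((lm.1 + (lm.2 : ℤ) + 1 : ℤ) : ℂ)) ^ q)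
    else 0

/-!
For fixed `m`, decompose `1 / (l ^ p * (l + m) ^ q)` into partial fractions in `l` and sum against
`(-1) ^ l`: the poles at `l = 0` and `l = -m` contribute powers of `m` times the two-sided values
`∑ l ≠ 0, (-1) ^ l / l ^ j`, which vanish for odd `j` and equal `2 φ(j)` for even `j`. The remaining
summation over `m` turns each power of `m` into a value of a Dirichlet series. The decomposition is
carried out by induction through
`1 / (l ^ (p+1) * (l+m) ^ (q+1)) = (1 / (l ^ (p+1) * (l+m) ^ q) - 1 / (l ^ p * (l+m) ^ (q+1))) / m`.
The only base case in which the partial fractions are not separately summable is `p = q = 1`; there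
shifts by one telescope, and `(-1) ^ l / l + (-1) ^ (l+1) / (l+1)` sums to `0` because it is
antisymmetric under `l ↦ -1 - l`.
-/

/-! ### Alternating zeta series over `ℤ` -/

lemma LSeriesHasSum_one_add_neg_one_pow {z : ℂ} (hz : 1 < z.re) :
    LSeriesHasSum (1 + fun n ↦ (-1) ^ n) z (2 ^ (1 - z) * riemannZeta z) := by
  have hinj : Function.Injective (fun n : ℕ ↦ 2 * n) := mul_right_injective₀ two_ne_zero
  refine (hinj.hasSum_iff fun n hn ↦ ?_).1
    (((LSeriesHasSum_one hz).mul_left (2 ^ (1 - z))).congr_fun fun n ↦ ?_)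
  · have hodd : Odd n := by
      by_contra h
      exact hn (even_iff_exists_two_mul.1 (Nat.not_odd_iff_even.1 h) |>.imp fun _ ↦ Eq.symm)
    simp [LSeries.term_def, hodd.neg_one_pow]
  · rcases eq_or_ne n 0 with rfl | hn
    · simp
    · have hcpow : (2 * n : ℂ) ^ z = 2 ^ z * n ^ z := mod_cast natCast_mul_natCast_cpow 2 n z
      simp only [Function.comp_apply, LSeries.term_def, mul_eq_zero, two_ne_zero, hn, or_self,
        if_false, Pi.add_apply, Pi.one_apply, pow_mul, neg_one_sq, one_pow,
        Nat.cast_mul, Nat.cast_ofNat, hcpow, cpow_sub _ _ two_ne_zero, cpow_one]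
      ring

lemma LSeriesHasSum_neg_one_pow {z : ℂ} (hz : 1 < z.re) :
    LSeriesHasSum (fun n ↦ (-1) ^ n) z (phi z) := by
  simpa [phi, sub_mul] using (LSeriesHasSum_one_add_neg_one_pow hz).sub (LSeriesHasSum_one hz)

/-- The two-sided series `∑ l ≠ 0, (-1) ^ l / l ^ j` for `2 ≤ j`. At `j = 1` it is the symmetric
sum, and at `j = 0` the regularized value `-1`, which is minus the term at the omitted index
`l = 0`. -/
noncomputable def bilateralPhi (j : ℕ) : ℂ := if Even j then 2 * phi j else 0

lemma bilateralPhi_zero : bilateralPhi 0 = -1 := by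
  norm_num [bilateralPhi, phi, riemannZeta_zero]

lemma neg_one_pow_mul_bilateralPhi (j : ℕ) : (-1) ^ j * bilateralPhi j = bilateralPhi j := by
  rcases j.even_or_odd with h | h
  · rw [h.neg_one_pow, one_mul]
  · simp [bilateralPhi, Nat.not_even_iff_odd.2 h]

lemma neg_one_zpow_neg {K : Type*} [DivisionRing K] (l : ℤ) : (-1 : K) ^ (-l) = (-1) ^ l := by
  rw [zpow_neg, ← inv_zpow, inv_neg_one]

lemma hasSum_neg_one_zpow_div_pow {j : ℕ} (hj : 2 ≤ j) :
    HasSum (fun l : ℤ ↦ (-1 : ℂ) ^ l / (l : ℂ) ^ j) (bilateralPhi j) := by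
  have hj0 : j ≠ 0 := by lia
  have hnat : HasSum (fun n : ℕ ↦ (-1 : ℂ) ^ (n : ℤ) / ((n : ℤ) : ℂ) ^ j) (phi j) := by
    refine HasSum.congr_fun (LSeriesHasSum_neg_one_pow (z := j) ?_) fun n ↦ ?_
    · rw [natCast_re]
      exact_mod_cast hj
    · rcases eq_or_ne n 0 with rfl | hn <;> simp [LSeries.term_def, *]
  have hneg : HasSum (fun n : ℕ ↦ (-1 : ℂ) ^ (-(n : ℤ)) / ((-(n : ℤ) : ℤ) : ℂ) ^ j)
      ((-1) ^ j * phi j) := by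
    refine (hnat.mul_left ((-1) ^ j)).congr_fun fun n ↦ ?_
    rw [neg_one_zpow_neg, Int.cast_neg, neg_pow ((n : ℤ) : ℂ)]
    rcases neg_one_pow_eq_or ℂ j with h | h <;> simp [h, div_neg]
  convert! HasSum.of_nat_of_neg (f := fun l : ℤ ↦ (-1 : ℂ) ^ l / (l : ℂ) ^ j) hnat hneg using 1
  rcases j.even_or_odd with h | h
  · simp [bilateralPhi, h, hj0, two_mul]
  · simp [bilateralPhi, Nat.not_even_iff_odd.2 h, h.neg_one_pow, hj0]

/-! ### The inner series over `l` -/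

section InnerSeries

/-- The general term of the inner series `∑ l ≠ 0, -m, (-1) ^ l / (l ^ p * (l + m) ^ q)`. The two
indices are excluded explicitly, since `x / 0 = 0` would only do so for nonzero exponents and the
recursion on `p` and `q` reaches `0`. -/
noncomputable def altTerm (p q m : ℕ) (l : ℤ) : ℂ :=
  if l ≠ 0 ∧ l + m ≠ 0 then (-1) ^ l / ((l : ℂ) ^ p * ((l : ℂ) + m) ^ q) else 0

variable {p q m : ℕ}

lemma altTerm_reflect (p q m : ℕ) (l : ℤ) :
    altTerm q p m (-m - l) = (-1) ^ (p + q + m) * altTerm p q m l := by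
  unfold altTerm
  by_cases h : l ≠ 0 ∧ l + m ≠ 0
  · have hsign : (-1 : ℂ) ^ (-(m : ℤ) - l) = (-1) ^ m * (-1) ^ l := by
      rw [sub_eq_add_neg, zpow_add₀ (by norm_num), neg_one_zpow_neg, neg_one_zpow_neg,
        zpow_natCast]
    have hleft : (((-m - l : ℤ) : ℂ)) ^ q = (-1) ^ q * ((l : ℂ) + m) ^ q := by
      rw [← mul_pow]; push_cast; ring
    have hright : ((-m - l : ℤ) : ℂ) + m = (-1) * l := by push_cast; ring
    rw [if_pos h, if_pos (by lia), hsign, hleft, hright, mul_pow, pow_add, pow_add]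
    rcases neg_one_pow_eq_or ℂ p with hp | hp <;> rcases neg_one_pow_eq_or ℂ q with hq | hq <;>
      simp only [hp, hq] <;> ring
  · rw [if_neg h, if_neg (by lia), mul_zero]

lemma altTerm_succ_succ (p q : ℕ) (hm : m ≠ 0) (l : ℤ) :
    altTerm (p + 1) (q + 1) m l = (altTerm (p + 1) q m l - altTerm p (q + 1) m l) / m := by
  unfold altTerm
  split_ifs with h
  · have hl : (l : ℂ) ≠ 0 := mod_cast h.1
    have hlm : (l : ℂ) + m ≠ 0 := mod_cast h.2
    field
  · simp

lemma mul_rpow_neg_le_of_two_mul_le_add {a b c r t : ℝ} (ha : 0 < a) (hb : 0 < b) (hc : 0 < c)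
    (habc : 2 * c ≤ a + b) (ht : 0 ≤ t) (htr : t ≤ r) :
    (a * b) ^ (-r) ≤ c ^ (-t) * (a ^ (-(2 * r - t)) + b ^ (-(2 * r - t))) := by
  wlog hab : a ≤ b generalizing a b
  · rw [mul_comm a, add_comm (a ^ _)]
    exact this hb ha (by linarith) (by linarith)
  -- The larger factor `b` pays for `c ^ (-t)` and lends its remaining decay to `a`.
  have hb_rpow : b ^ (-r) ≤ c ^ (-t) * a ^ (t - r) := calc
    b ^ (-r) = b ^ (-t) * b ^ (t - r) := by rw [← Real.rpow_add hb]; ring_nf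
    _ ≤ c ^ (-t) * a ^ (t - r) := mul_le_mul
      (Real.rpow_le_rpow_of_nonpos hc (by linarith) (by linarith))
      (Real.rpow_le_rpow_of_nonpos ha hab (by linarith)) (by positivity) (by positivity)
  calc (a * b) ^ (-r) = a ^ (-r) * b ^ (-r) := Real.mul_rpow ha.le hb.le
    _ ≤ a ^ (-r) * (c ^ (-t) * a ^ (t - r)) := by gcongr
    _ = c ^ (-t) * a ^ (-(2 * r - t)) := by
      rw [mul_left_comm, ← Real.rpow_add ha]; ring_nf
    _ ≤ c ^ (-t) * (a ^ (-(2 * r - t)) + b ^ (-(2 * r - t))) := by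
      gcongr
      exact le_add_of_nonneg_right (by positivity)

lemma norm_altTerm_le {r t : ℝ} (hm : m ≠ 0) (hrp : r ≤ p) (hrq : r ≤ q) (ht : 0 ≤ t)
    (htr : t ≤ r) (l : ℤ) :
    ‖altTerm p q m l‖ ≤ (m / 2 : ℝ) ^ (-t) *
      (|(l : ℝ)| ^ (-(2 * r - t)) + |((l + m : ℤ) : ℝ)| ^ (-(2 * r - t))) := by
  unfold altTerm
  split_ifs with h
  · have hl : (1 : ℝ) ≤ |(l : ℝ)| := mod_cast Int.one_le_abs h.1
    have hlm : (1 : ℝ) ≤ |((l + m : ℤ) : ℝ)| := mod_cast Int.one_le_abs h.2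
    have htriangle : 2 * (m / 2 : ℝ) ≤ |(l : ℝ)| + |((l + m : ℤ) : ℝ)| := by
      have := abs_sub ((l + m : ℤ) : ℝ) l
      push_cast at this ⊢
      rw [add_sub_cancel_left, Nat.abs_cast] at this
      linarith
    have hnorm : ‖(-1 : ℂ) ^ l / ((l : ℂ) ^ p * ((l : ℂ) + m) ^ q)‖ =
        |(l : ℝ)| ^ (-p : ℝ) * |((l + m : ℤ) : ℝ)| ^ (-q : ℝ) := by
      have hcast : (l : ℂ) + m = ((l + m : ℤ) : ℂ) := by push_cast; rfl
      simp [hcast, -Int.cast_add, Real.rpow_neg, mul_comm]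
    calc _ = |(l : ℝ)| ^ (-p : ℝ) * |((l + m : ℤ) : ℝ)| ^ (-q : ℝ) := hnorm
      _ ≤ |(l : ℝ)| ^ (-r) * |((l + m : ℤ) : ℝ)| ^ (-r) := by gcongr
      _ = (|(l : ℝ)| * |((l + m : ℤ) : ℝ)|) ^ (-r) := by
        rw [Real.mul_rpow (abs_nonneg _) (abs_nonneg _)]
      _ ≤ _ := mul_rpow_neg_le_of_two_mul_le_add (by linarith) (by linarith) (by positivity)
        htriangle ht htr
  · rw [norm_zero]
    positivity

lemma summable_altTerm (hp : 0 < p) (hq : 0 < q) (hm : m ≠ 0) : Summable (altTerm p q m) := by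
  have hsum := Real.summable_abs_int_rpow (b := 2 * 1 - 0) (by norm_num)
  refine .of_norm_bounded ((hsum.add ?_).mul_left _)
    (norm_altTerm_le hm (mod_cast hp) (mod_cast hq) le_rfl zero_le_one)
  exact (Equiv.addRight (m : ℤ)).summable_iff.2 hsum

end InnerSeries

/-! ### The case `p = q = 1` -/

/-- The term `(-1) ^ l / l` of the conditionally convergent two-sided series of exponent `1`, with
value `0` at `l = 0`. -/
noncomputable def altRecip (l : ℤ) : ℂ := (-1) ^ l / l

lemma altRecip_neg (l : ℤ) : altRecip (-l) = -altRecip l := by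
  simp only [altRecip, neg_one_zpow_neg, Int.cast_neg, div_neg]

lemma altRecip_sub_eq {m : ℕ} (hm : m ≠ 0) (l : ℤ) :
    altRecip l - (-1) ^ m * altRecip (l + m) = m * altTerm 1 1 m l -
      ((if l = 0 then 1 / (m : ℂ) else 0) + if l = -m then (-1) ^ m / (m : ℂ) else 0) := by
  have hsign (k : ℤ) : (-1 : ℂ) ^ m * (-1) ^ (k + m) = (-1) ^ k := by
    rw [zpow_add₀ (by norm_num), zpow_natCast, mul_left_comm, pow_mul_pow_eq_one m (by norm_num),
      mul_one]
  rcases eq_or_ne l 0 with rfl | hl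
  · simpa [altRecip, altTerm, hm, mul_div_assoc] using congrArg (· / (m : ℂ)) (hsign 0)
  rcases eq_or_ne l (-m) with rfl | hlm
  · simp [altRecip, altTerm, hm, neg_one_zpow_neg, div_neg, -zpow_neg]
  have hlm' : l + m ≠ 0 := by lia
  have hlC : (l : ℂ) ≠ 0 := mod_cast hl
  have hlmC : (l : ℂ) + m ≠ 0 := mod_cast hlm'
  simp only [altRecip, altTerm, hl, hlm, hlm', ne_eq, not_false_eq_true, and_self, if_true,
    if_false, mul_div_assoc', hsign]
  push_cast
  field

lemma hasSum_altRecip_add_altRecip_succ :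
    HasSum (fun l : ℤ ↦ altRecip l + altRecip (l + 1)) 0 := by
  have hsummable : Summable fun l : ℤ ↦ altRecip l + altRecip (l + 1) := by
    have hsummable_sub : Summable fun l ↦ altRecip l - (-1) ^ 1 * altRecip (l + (1 : ℕ)) := by
      simp_rw [altRecip_sub_eq one_ne_zero]
      exact ((summable_altTerm one_pos one_pos one_ne_zero).mul_left _).sub
        ((hasSum_ite_eq _ _).summable.add (hasSum_ite_eq _ _).summable)
    simpa using hsummable_sub
  have hantisymm (l : ℤ) : altRecip l + altRecip (l + 1) =
      -(altRecip (-1 - l) + altRecip (-1 - l + 1)) := by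
    rw [show -1 - l + 1 = -l by ring, show -1 - l = -(l + 1) by ring, altRecip_neg, altRecip_neg]
    ring
  have hreflect := ((Equiv.subLeft (-1 : ℤ)).hasSum_iff.2 hsummable.hasSum).neg.congr_fun hantisymm
  have hzero := self_eq_neg.1 (hsummable.hasSum.unique hreflect)
  exact hzero ▸ hsummable.hasSum

lemma hasSum_altRecip_sub (m : ℕ) :
    HasSum (fun l : ℤ ↦ altRecip l - (-1) ^ m * altRecip (l + m)) 0 := by
  induction m with
  | zero => simp
  | succ m ih =>
    have hshift := (Equiv.addRight (m : ℤ)).hasSum_iff.2 hasSum_altRecip_add_altRecip_succ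
    convert! ih.add (hshift.mul_left ((-1) ^ m)) using 2 with l
    · simp only [Function.comp_apply, Equiv.coe_addRight, Nat.cast_succ, pow_succ, ← add_assoc]
      ring
    · ring

/-! ### Evaluation of the inner series -/

/-- The contribution to the inner series of the principal part of `1 / (l ^ p * (l + m) ^ q)` at
the pole `l = 0`, normalized by the factor `(-1) ^ p * m ^ (p + q)`; the term `j = 0` accounts for
the omitted index. -/
noncomputable def poleSum (p q m : ℕ) : ℂ :=
  ∑ j ∈ range (p + 1), (q.multichoose (p - j) : ℂ) * bilateralPhi j * (m : ℂ) ^ j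

lemma poleSum_zero_left (q m : ℕ) : poleSum 0 q m = -1 := by
  simp [poleSum, bilateralPhi_zero]

lemma poleSum_zero_right (p m : ℕ) : poleSum p 0 m = bilateralPhi p * (m : ℂ) ^ p := by
  rw [poleSum, sum_range_succ, sum_eq_zero, zero_add, Nat.sub_self, Nat.multichoose_zero_right,
    Nat.cast_one, one_mul]
  intro j hj
  obtain ⟨k, hk⟩ : ∃ k, p - j = k + 1 := Nat.exists_eq_succ_of_ne_zero
    (Nat.sub_ne_zero_of_lt (mem_range.1 hj))
  rw [hk, Nat.multichoose_zero_succ, Nat.cast_zero, zero_mul, zero_mul]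

lemma poleSum_succ_succ (p q m : ℕ) :
    poleSum (p + 1) (q + 1) m = poleSum (p + 1) q m + poleSum p (q + 1) m := by
  simp only [poleSum]
  rw [sum_range_succ _ (p + 1), sum_range_succ _ (p + 1), add_right_comm, ← sum_add_distrib,
    Nat.sub_self, Nat.multichoose_zero_right, Nat.multichoose_zero_right]
  congr 1
  refine sum_congr rfl fun j hj ↦ ?_
  rw [Nat.sub_add_comm (mem_range_succ_iff.1 hj), Nat.multichoose_succ_succ]
  push_cast
  ring

/-- The value of the inner series `∑ l ≠ 0, -m, (-1) ^ l / (l ^ p * (l + m) ^ q)`: the contributions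
of the two poles `l = 0` and `l = -m`. -/
noncomputable def innerSum (p q m : ℕ) : ℂ :=
  (-1) ^ p / (m : ℂ) ^ (p + q) * (poleSum p q m + (-1) ^ m * poleSum q p m)

lemma innerSum_swap (p q m : ℕ) : innerSum q p m = (-1) ^ (p + q + m) * innerSum p q m := by
  simp only [innerSum, pow_add]
  rcases neg_one_pow_eq_or ℂ p with hp | hp <;> rcases neg_one_pow_eq_or ℂ m with hm | hm <;>
    simp only [hp, hm] <;> ring

lemma innerSum_succ_succ (p q : ℕ) {m : ℕ} (hm : m ≠ 0) :
    innerSum (p + 1) (q + 1) m = (innerSum (p + 1) q m - innerSum p (q + 1) m) / m := by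
  simp only [innerSum, poleSum_succ_succ p q, poleSum_succ_succ q p]
  field

section Evaluation

variable {p q m : ℕ}

lemma hasSum_altTerm_swap (h : HasSum (altTerm p q m) (innerSum p q m)) :
    HasSum (altTerm q p m) (innerSum q p m) := by
  rw [innerSum_swap, ← (Equiv.subLeft (-m : ℤ)).hasSum_iff]
  exact (h.mul_left _).congr_fun (altTerm_reflect p q m)

lemma hasSum_altTerm_zero_right (hp : 2 ≤ p) (hm : m ≠ 0) :
    HasSum (altTerm p 0 m) (innerSum p 0 m) := by
  have hp0 : p ≠ 0 := by lia
  convert! (hasSum_neg_one_zpow_div_pow hp).sub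
    (hasSum_ite_eq (-m : ℤ) ((-1 : ℂ) ^ m / (-m) ^ p)) using 1
  · ext l
    rcases eq_or_ne l 0 with rfl | hl
    · simp [altTerm, hp0, hm]
    · rcases eq_or_ne l (-m) with rfl | hlm
      · simp [altTerm, neg_one_zpow_neg, -zpow_neg]
      · simp [altTerm, hl, hlm, show l + m ≠ 0 by lia]
  · rw [innerSum, poleSum_zero_left, poleSum_zero_right, neg_pow (m : ℂ), add_zero]
    have := neg_one_pow_mul_bilateralPhi p
    rcases neg_one_pow_eq_or ℂ p with h | h <;> rw [h] at this ⊢ <;> field_simp <;>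
      linear_combination (m : ℂ) ^ p * this

lemma hasSum_altTerm_one_one (hm : m ≠ 0) : HasSum (altTerm 1 1 m) (innerSum 1 1 m) := by
  have hpole : poleSum 1 1 m = -1 := by
    have hone : bilateralPhi 1 = 0 := by simp [bilateralPhi]
    simp [poleSum, sum_range_succ, bilateralPhi_zero, hone]
  convert! ((hasSum_altRecip_sub m).add ((hasSum_ite_eq (0 : ℤ) (1 / (m : ℂ))).add
    (hasSum_ite_eq (-m : ℤ) ((-1) ^ m / (m : ℂ))))).div_const (m : ℂ) using 1
  · ext l
    rw [altRecip_sub_eq hm]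
    field
  · rw [innerSum, hpole]
    field

theorem hasSum_altTerm (hm : m ≠ 0) (hpq : 2 ≤ p + q) :
    HasSum (altTerm p q m) (innerSum p q m) := by
  obtain ⟨n, hn⟩ := Nat.exists_eq_add_of_le' hpq
  induction n generalizing p q with
  | zero =>
    obtain ⟨rfl, rfl⟩ | ⟨rfl, rfl⟩ | ⟨rfl, rfl⟩ :
        p = 0 ∧ q = 2 ∨ p = 1 ∧ q = 1 ∨ p = 2 ∧ q = 0 := by lia
    · exact hasSum_altTerm_swap (hasSum_altTerm_zero_right le_rfl hm)
    · exact hasSum_altTerm_one_one hm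
    · exact hasSum_altTerm_zero_right le_rfl hm
  | succ n ih =>
    rcases p with _ | p
    · exact hasSum_altTerm_swap (hasSum_altTerm_zero_right (by lia) hm)
    rcases q with _ | q
    · exact hasSum_altTerm_zero_right (by lia) hm
    rw [innerSum_succ_succ p q hm, funext (altTerm_succ_succ p q hm)]
    exact ((ih (by lia) (by lia)).sub (ih (by lia) (by lia))).div_const _

end Evaluation

/-! ### Summation over `m` -/

section DoubleSeries

open LSeries

variable {f : ℕ → ℂ} {s : ℂ} {p q : ℕ}

lemma LSeriesHasSum_mul_pow_div_pow {a : ℂ} {j k : ℕ}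
    (h : LSeriesHasSum f (s + k - j) a) :
    LSeriesHasSum (fun n ↦ f n * ((n : ℂ) ^ j / (n : ℂ) ^ k)) s a := by
  refine HasSum.congr_fun h fun n ↦ ?_
  rcases eq_or_ne n 0 with rfl | hn
  · simp
  have hnC : (n : ℂ) ≠ 0 := mod_cast hn
  rw [term_of_ne_zero hn, term_of_ne_zero hn, cpow_sub _ _ hnC, cpow_add _ _ hnC, cpow_natCast,
    cpow_natCast]
  field

lemma LSeriesHasSum_mul_poleSum (hs : 1 < s.re + q) {L : ℂ → ℂ}
    (hL : ∀ z : ℂ, 1 < z.re → LSeriesHasSum f z (L z)) :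
    LSeriesHasSum (fun n ↦ f n * (poleSum p q n / (n : ℂ) ^ (p + q))) s
      (∑ j ∈ range (p + 1), (q.multichoose (p - j) : ℂ) * bilateralPhi j * L (s + p + q - j)) := by
  have hterm (j : ℕ) (hj : j ∈ range (p + 1)) :
      LSeriesHasSum (fun n ↦ f n * ((n : ℂ) ^ j / (n : ℂ) ^ (p + q))) s (L (s + p + q - j)) := by
    have hjp : (j : ℝ) ≤ p := mod_cast mem_range_succ_iff.1 hj
    have hre : 1 < (s + (p + q : ℕ) - j).re := by
      simp only [sub_re, add_re, natCast_re, Nat.cast_add]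
      linarith
    convert! LSeriesHasSum_mul_pow_div_pow (hL _ hre) using 2
    push_cast
    ring
  convert! LSeriesHasSum.sum fun j hj ↦
    (hterm j hj).smul ((q.multichoose (p - j) : ℂ) * bilateralPhi j) using 1
  ext n
  simp only [poleSum, sum_div, mul_sum, Finset.sum_apply, Pi.smul_apply, smul_eq_mul]
  exact sum_congr rfl fun j _ ↦ by ring

lemma LSeriesHasSum_mul_innerSum (hs : 1 < s.re + min (p : ℝ) q)
    {L L' : ℂ → ℂ} (hL : ∀ z : ℂ, 1 < z.re → LSeriesHasSum f z (L z))
    (hL' : ∀ z : ℂ, 1 < z.re → LSeriesHasSum (fun n ↦ (-1) ^ n * f n) z (L' z)) :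
    LSeriesHasSum (fun n ↦ f n * innerSum p q n) s
      ((-1) ^ p * (
        ∑ j ∈ range (p + 1), (q.multichoose (p - j) : ℂ) * bilateralPhi j * L (s + p + q - j) +
        ∑ j ∈ range (q + 1), (p.multichoose (q - j) : ℂ) * bilateralPhi j *
          L' (s + p + q - j))) := by
  have hp : 1 < s.re + p := by linarith [min_le_left (p : ℝ) q]
  have hq : 1 < s.re + q := by linarith [min_le_right (p : ℝ) q]
  convert! ((LSeriesHasSum_mul_poleSum (p := p) hq hL).add
    (LSeriesHasSum_mul_poleSum (p := q) hp hL')).smul ((-1) ^ p) using 1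
  · ext n
    simp only [innerSum, Pi.smul_apply, Pi.add_apply, smul_eq_mul, add_comm q p]
    ring
  · simp only [add_right_comm s (q : ℂ)]

lemma norm_term_add_ofReal (f : ℕ → ℂ) (s : ℂ) (t : ℝ) (n : ℕ) :
    ‖term f (s + t) n‖ = ‖term f s n‖ * (n : ℝ) ^ (-t) := by
  rcases eq_or_ne n 0 with rfl | hn
  · simp
  · have hpos : (0 : ℝ) < n := by positivity
    simp only [norm_term_eq, hn, if_false, add_re, ofReal_re, Real.rpow_add hpos,
      Real.rpow_neg hpos.le]
    field

lemma summable_term_mul_altTerm (hp : 0 < p) (hq : 0 < q) (hs : 1 < s.re + min (p : ℝ) q)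
    (hf : ∀ z : ℂ, 1 < z.re → LSeriesSummable f z) :
    Summable fun x : ℕ × ℤ ↦ term f s x.1 * altTerm p q x.1 x.2 := by
  set r : ℝ := min (p : ℝ) q
  have hr : 1 ≤ r := le_min (mod_cast hp) (mod_cast hq)
  -- Spending `m ^ (-t)` of the decay on the outer series makes both series absolutely convergent.
  obtain ⟨t, ht, htr⟩ : ∃ t, max 0 (1 - s.re) < t ∧ t < r :=
    exists_between (max_lt (by linarith) (by linarith))
  obtain ⟨ht0, hts⟩ := max_lt_iff.1 ht
  have houter : Summable fun n ↦ ‖term f (s + t) n‖ :=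
    (hf _ (by rw [add_re, ofReal_re]; linarith)).norm
  have hinner : Summable fun l : ℤ ↦ |(l : ℝ)| ^ (-(2 * r - t)) :=
    Real.summable_abs_int_rpow (by linarith)
  have hprod : Summable fun x : ℕ × ℤ ↦ ‖term f (s + t) x.1‖ * |(x.2 : ℝ)| ^ (-(2 * r - t)) :=
    houter.mul_of_nonneg hinner (fun _ ↦ norm_nonneg _) fun _ ↦ by positivity
  have hshear : Summable fun x : ℕ × ℤ ↦
      ‖term f (s + t) x.1‖ * |((x.2 + x.1 : ℤ) : ℝ)| ^ (-(2 * r - t)) :=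
    (Equiv.prodShear (.refl ℕ) fun n : ℕ ↦ Equiv.addRight (n : ℤ)).summable_iff.2 hprod
  refine .of_norm_bounded ((hprod.add hshear).mul_left (2 ^ t)) fun ⟨n, l⟩ ↦ ?_
  rcases eq_or_ne n 0 with rfl | hn
  · simp
  calc ‖term f s n * altTerm p q n l‖
      ≤ ‖term f s n‖ * ((n / 2 : ℝ) ^ (-t) *
          (|(l : ℝ)| ^ (-(2 * r - t)) + |((l + n : ℤ) : ℝ)| ^ (-(2 * r - t)))) := by
        rw [norm_mul]
        gcongr
        exact norm_altTerm_le hn (min_le_left _ _) (min_le_right _ _) ht0.le htr.le l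
    _ = _ := by
        rw [norm_term_add_ofReal, Real.div_rpow n.cast_nonneg zero_le_two,
          Real.rpow_neg zero_le_two, div_inv_eq_mul]
        ring

lemma hasSum_term_mul_altTerm (hpq : 2 ≤ p + q) (n : ℕ) :
    HasSum (fun l ↦ term f s n * altTerm p q n l)
      (term (fun n ↦ f n * innerSum p q n) s n) := by
  rcases eq_or_ne n 0 with rfl | hn
  · simp
  · convert! (hasSum_altTerm hn hpq).mul_left (term f s n) using 1
    simp only [term_of_ne_zero hn]
    ring

lemma T_neg_one_left_eq_tsum (p q : ℕ) (s y : ℂ) :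
    T p s q (-1) y = ∑' x : ℕ × ℤ, term (fun n ↦ y ^ n) s x.1 * altTerm p q x.1 x.2 := by
  have hinj : Function.Injective fun x : ℤ × ℕ ↦ (x.2 + 1, x.1) := by
    rintro ⟨l, m⟩ ⟨l', m'⟩ h
    simp_all
  rw [T, ← hinj.tsum_eq]
  · refine tsum_congr fun ⟨l, m⟩ ↦ ?_
    simp only [altTerm, term_of_ne_zero m.succ_ne_zero, mul_ite, mul_zero]
    push_cast
    simp only [add_assoc]
    split_ifs
    · field
    · rfl
  · rintro ⟨m, l⟩ hx
    obtain ⟨k, rfl⟩ := Nat.exists_eq_succ_of_ne_zero (n := m) (by rintro rfl; simp at hx)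
    exact ⟨(l, k), rfl⟩

end DoubleSeries

lemma multichoose_sub_eq_choose {p q k : ℕ} (hq : 0 < q) (hk : k ≤ p) :
    q.multichoose (p - k) = (p + q - 1 - k).choose (q - 1) := by
  rw [Nat.multichoose_eq, show q + (p - k) - 1 = p + q - 1 - k by lia]
  exact Nat.choose_symm_of_eq_add (by lia)

lemma sum_range_succ_ite_even {M : Type*} [AddCommMonoid M] (p : ℕ) (g : ℕ → M) :
    ∑ j ∈ range (p + 1), (if Even j then g j else 0) = ∑ k ∈ range (p / 2 + 1), g (2 * k) := by
  rw [← sum_filter]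
  refine (sum_nbij (2 * ·) ?_ ?_ ?_ fun _ _ ↦ rfl).symm
  · intro k hk
    have := mem_range.1 hk
    exact mem_filter.2 ⟨mem_range.2 (by lia), even_two_mul k⟩
  · exact (mul_right_injective₀ two_ne_zero).injOn
  · intro j hj
    obtain ⟨hjp, heven⟩ := mem_filter.1 hj
    obtain ⟨k, rfl⟩ := even_iff_exists_two_mul.1 heven
    have := mem_range.1 hjp
    exact ⟨k, mem_coe.2 (mem_range.2 (by lia)), rfl⟩

lemma sum_multichoose_mul_bilateralPhi {p q : ℕ} (hq : 0 < q) (g : ℕ → ℂ) :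
    ∑ j ∈ range (p + 1), (q.multichoose (p - j) : ℂ) * bilateralPhi j * g j =
      2 * ∑ k ∈ range (p / 2 + 1),
        phi (2 * k) * ((p + q - 1 - 2 * k).choose (q - 1) : ℂ) * g (2 * k) := by
  have hterm (j : ℕ) (hj : j ∈ range (p + 1)) :
      (q.multichoose (p - j) : ℂ) * bilateralPhi j * g j =
        if Even j then 2 * (phi j * ((p + q - 1 - j).choose (q - 1) : ℂ) * g j) else 0 := by
    rw [multichoose_sub_eq_choose hq (mem_range_succ_iff.1 hj), bilateralPhi]
    split_ifs <;> ring
  rw [sum_congr rfl hterm, sum_range_succ_ite_even, mul_sum]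
  push_cast
  rfl

/-- `L` and `L'` are the polylogarithms `z ↦ Li_z(y)` and `z ↦ Li_z(-y)` on `1 < Re z`. -/
theorem T_eval_negone_negone_general (p q : ℕ) (hp : 0 < p) (hq : 0 < q) (s y : ℂ)
    (hs : 1 < s.re + min (p : ℝ) q) (L L' : ℂ → ℂ)
    (hL : ∀ z : ℂ, 1 < z.re → LSeriesHasSum (fun n ↦ y ^ n) z (L z))
    (hL' : ∀ z : ℂ, 1 < z.re → LSeriesHasSum (fun n ↦ (-y) ^ n) z (L' z)) :
    T p s q (-1) y =
      2 * (-1 : ℂ) ^ p * ∑ k ∈ range (p / 2 + 1), phi (2 * k) *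
          (Nat.choose (p + q - 1 - 2 * k) (q - 1) : ℂ) * L (s + p + q - 2 * k) +
      2 * (-1 : ℂ) ^ p * ∑ k ∈ range (q / 2 + 1), phi (2 * k) *
          (Nat.choose (p + q - 1 - 2 * k) (p - 1) : ℂ) * L' (s + p + q - 2 * k) := by
  have hsummable := summable_term_mul_altTerm hp hq hs fun z hz ↦ (hL z hz).LSeriesSummable
  have hrows := hsummable.hasSum.prod_fiberwise (hasSum_term_mul_altTerm (by lia))
  have hDirichlet := LSeriesHasSum_mul_innerSum hs hL (by simpa only [← neg_pow] using hL')
  rw [T_neg_one_left_eq_tsum, hrows.unique hDirichlet,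
    sum_multichoose_mul_bilateralPhi hq fun j ↦ L (s + p + q - j),
    sum_multichoose_mul_bilateralPhi hp fun j ↦ L' (s + p + q - j), add_comm q p]
  push_cast
  ring

/-- Evaluation of `T(p,s,q;-1,-1)` in terms of `ζ` and `φ`
(Corollary 3.4, last formula, of Komori–Matsumoto–Tsumura). -/
theorem T_eval_negone_negone (p q : ℕ) (hp : 0 < p) (hq : 0 < q) (s : ℝ) (hs : 1 < s) :
    T p (s : ℂ) q (-1) (-1) =
      2 * (-1 : ℂ) ^ p * ∑ k ∈ range (p / 2 + 1), phi (2 * k) *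
          (Nat.choose (p + q - 1 - 2 * k) (q - 1) : ℂ) *
          phi ((s : ℂ) + p + q - 2 * k) +
      2 * (-1 : ℂ) ^ p * ∑ k ∈ range (q / 2 + 1), phi (2 * k) *
          (Nat.choose (p + q - 1 - 2 * k) (p - 1) : ℂ) *
          riemannZeta ((s : ℂ) + p + q - 2 * k) :=
  T_eval_negone_negone_general p q hp hq s (-1)
    (lt_add_of_lt_of_nonneg hs (by positivity)) phi riemannZeta (fun _ ↦ LSeriesHasSum_neg_one_pow)
    fun _ hz ↦ by simpa only [neg_neg, one_pow] using! LSeriesHasSum_one hz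
end

section
/- Let p and q be positive integers and let s be a real number with s > 1. Then T(p,s,q;−1,i) = 2(−1)^p Σ_{k=0}^{⌊p/2⌋} φ(2k) C(p+q−1−2k, q−1) φ(s+p+q−2k; 1/4) + 2(−1)^p Σ_{k=0}^{⌊q/2⌋} φ(2k) C(p+q−1−2k, p−1) φ(s+p+q−2k; −1/4), where C(n,k) denotes the binomial coefficient. -/
open Complex Finset

/-- The Lerch value `φ(w;1/4) = Σ_{m ≥ 1} i^m m^{-w}`. -/
noncomputable def phiQuarter (w : ℂ) : ℂ :=
  ∑' m : ℕ, Complex.I ^ (m + 1) / (((m + 1 : ℕ) : ℂ)) ^ w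

/-- The Lerch value `φ(w;-1/4) = Σ_{m ≥ 1} (-i)^m m^{-w}`. -/
noncomputable def phiNegQuarter (w : ℂ) : ℂ :=
  ∑' m : ℕ, (-Complex.I) ^ (m + 1) / (((m + 1 : ℕ) : ℂ)) ^ w

/-! For fixed `m ≠ 0`, partial fractions in `l` split `1 / (l ^ p * (l + m) ^ q)` into poles at
`l = 0` and `l = -m`, and reduce the sum over `l` to the sums of `(-1) ^ l / l ^ j`, taken over
symmetric intervals so that they converge also for `j = 1`. Such a sum is `2 * phi j` for even `j`
and `0` for odd `j`. The expansion fails at `l = 0` and `l = -m` themselves, where `1 / 0 = 0`; the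
correction at each of these points is a term with `j = 0`, whose coefficient `-1` equals
`2 * phi 0`, which is why the `k = 0` terms of the theorem look like all the others. Summing the
resulting powers of `m` against `y ^ m / m ^ s` gives polylogarithms at `y` and `-y`.
-/

open Filter Topology SummationFilter

section PartialFractions

variable {K : Type*} [Field K]

/-- The principal part at `z = 0` of `1 / (z ^ p * (z + d) ^ q)`, with `u j` in place of
`1 / z ^ j`. The index `j = 0`, absent from the genuine principal part, is kept because it carries
the correction terms of `poleTerm`. -/
def principalPart (u : ℕ → K) (d : K) (p q : ℕ) : K :=
  ∑ i ∈ range (p + 1), (-1) ^ i * (Nat.multichoose q i : K) * u (p - i) / d ^ (q + i)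

@[simp]
theorem principalPart_zero_left (u : ℕ → K) (d : K) (q : ℕ) :
    principalPart u d 0 q = u 0 / d ^ q := by
  simp [principalPart]

@[simp]
theorem principalPart_zero_right (u : ℕ → K) (d : K) (p : ℕ) : principalPart u d p 0 = u p := by
  simp [principalPart, sum_range_succ', Nat.multichoose_zero_succ]

theorem mul_principalPart_succ_succ (u : ℕ → K) {d : K} (hd : d ≠ 0) (p q : ℕ) :
    d * principalPart u d (p + 1) (q + 1) =
      principalPart u d (p + 1) q - principalPart u d p (q + 1) := by
  have pascal (i : ℕ) :
      d * ((-1) ^ (i + 1) * (Nat.multichoose (q + 1) (i + 1) : K) * u (p + 1 - (i + 1)) /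
          d ^ (q + 1 + (i + 1))) =
        (-1) ^ (i + 1) * (Nat.multichoose q (i + 1) : K) * u (p + 1 - (i + 1)) / d ^ (q + (i + 1)) -
          (-1) ^ i * (Nat.multichoose (q + 1) i : K) * u (p - i) / d ^ (q + 1 + i) := by
    rw [Nat.multichoose_succ_succ, Nat.add_sub_add_right]
    push_cast
    field_simp
    ring
  have leading : d * (u (p + 1) / d ^ (q + 1)) = u (p + 1) / d ^ q := by
    rw [pow_succ', mul_div_assoc', mul_div_mul_left _ _ hd]
  simp only [principalPart, sum_range_succ' _ (p + 1), mul_add, mul_sum, pascal, sum_sub_distrib]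
  simp only [pow_zero, Nat.multichoose_zero_right, Nat.cast_one, one_mul, tsub_zero, add_zero,
    leading]
  ring

theorem mul_principalPart (c : K) (u : ℕ → K) (d : K) (p q : ℕ) :
    c * principalPart u d p q = principalPart (fun j ↦ c * u j) d p q := by
  rw [principalPart, mul_sum]
  exact sum_congr rfl fun i _ ↦ by ring

theorem principalPart_neg (u : ℕ → K) (d : K) (p q : ℕ) :
    principalPart u (-d) p q =
      (-1) ^ (p + q) * principalPart (fun j ↦ (-1) ^ j * u j) d p q := by
  rw [principalPart, principalPart, mul_sum]
  refine sum_congr rfl fun i hi ↦ ?_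
  obtain ⟨j, rfl⟩ := Nat.exists_eq_add_of_le (mem_range_succ_iff.mp hi)
  rw [Nat.add_sub_cancel_left]
  have sign : (-1 : K) ^ (i + j + q) * (-1) ^ j = (-1) ^ (q + i) := by
    rw [← pow_add, neg_one_pow_congr]
    grind
  calc (-1) ^ i * (Nat.multichoose q i : K) * u j / (-d) ^ (q + i)
    _ = (-1) ^ (q + i) * ((-1) ^ i * (Nat.multichoose q i : K) * u j / d ^ (q + i)) := by
      rw [neg_pow d, div_mul_eq_div_div_swap, div_eq_mul_inv _ ((-1) ^ _), ← inv_pow, inv_neg_one,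
        mul_comm]
    _ = _ := by
      rw [← sign]
      ring

variable [DecidableEq K]

/-- `1 / z ^ j`, regularised at `j = 0`, where it is `-1` for `z = 0` and `0` otherwise. With this
correction, `1 / (z ^ p * w ^ q)` and its partial fraction expansion agree also where `z` or `w`
vanishes and `1 / 0 = 0`. -/
def poleTerm (z : K) (j : ℕ) : K :=
  if j = 0 then (if z = 0 then -1 else 0) else 1 / z ^ j

theorem ite_one_div_pow_mul_pow_eq_principalPart_add {z w : K} (hzw : z ≠ w) {p q : ℕ}
    (hpq : p + q ≠ 0) :
    (if z = 0 ∨ w = 0 then 0 else 1 / (z ^ p * w ^ q)) =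
      principalPart (poleTerm z) (w - z) p q + principalPart (poleTerm w) (z - w) q p := by
  have base {z w : K} (hzw : z ≠ w) {p : ℕ} (hp : p ≠ 0) :
      (if z = 0 ∨ w = 0 then 0 else 1 / z ^ p) = poleTerm z p + poleTerm w 0 / (z - w) ^ p := by
    by_cases hz : z = 0
    · simp [poleTerm, hz, hp, (hz ▸ hzw).symm]
    · by_cases hw : w = 0 <;> simp [poleTerm, hz, hw, hp, neg_div]
  induction p generalizing q with
  | zero => simpa [or_comm, add_comm] using base hzw.symm (by simpa using hpq)
  | succ p ihp =>
    induction q with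
    | zero => simpa using base hzw hpq
    | succ q ihq =>
      have hd : w - z ≠ 0 := sub_ne_zero.2 hzw.symm
      have hd' : z - w ≠ 0 := sub_ne_zero.2 hzw
      apply mul_left_cancel₀ hd
      calc (w - z) * (if z = 0 ∨ w = 0 then 0 else 1 / (z ^ (p + 1) * w ^ (q + 1)))
        _ = (if z = 0 ∨ w = 0 then 0 else 1 / (z ^ (p + 1) * w ^ q)) -
              (if z = 0 ∨ w = 0 then 0 else 1 / (z ^ p * w ^ (q + 1))) := by
          split_ifs with h
          · simp
          · obtain ⟨hz, hw⟩ := not_or.mp h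
            field_simp
            ring
        _ = _ := by
          rw [ihq (by omega), ihp (by omega)]
          linear_combination mul_principalPart_succ_succ (poleTerm w) hd' q p -
            mul_principalPart_succ_succ (poleTerm z) hd p q

theorem one_div_pow_mul_pow_eq_principalPart_add {z w : K} (hzw : z ≠ w) {p q : ℕ} (hp : p ≠ 0)
    (hq : q ≠ 0) :
    1 / (z ^ p * w ^ q) =
      principalPart (poleTerm z) (w - z) p q + principalPart (poleTerm w) (z - w) q p := by
  rw [← ite_one_div_pow_mul_pow_eq_principalPart_add hzw (by omega)]
  split_ifs with h
  · rcases h with rfl | rfl <;> simp [hp, hq]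
  · rfl

end PartialFractions

section SymmetricSums

theorem hasSum_symmetricIcc_of_odd {E : Type*} [AddCommGroup E] [IsAddTorsionFree E]
    [TopologicalSpace E] {f : ℤ → E} (hf : f.Odd) : HasSum f 0 (symmetricIcc ℤ) := by
  have sum_eq_zero (N : ℕ) : ∑ l ∈ Icc (-N : ℤ) N, f l = 0 := by
    refine hf.finsetSum_eq_zero (Finset.ext fun l ↦ ?_)
    simp only [mem_map_equiv, Equiv.neg_symm, Equiv.neg_apply, mem_Icc]
    omega
  simpa only [hasSum_symmetricIcc_iff, sum_eq_zero] using tendsto_const_nhds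

variable {E : Type*} [AddCommGroup E] [TopologicalSpace E] [IsTopologicalAddGroup E] {f : ℤ → E}

theorem hasSum_symmetricIcc_sub_shift_one (hf : Tendsto f cofinite (𝓝 0)) :
    HasSum (fun l ↦ f l - f (l + 1)) 0 (symmetricIcc ℤ) := by
  have telescope (N : ℕ) : ∑ l ∈ Icc (-N : ℤ) N, (f l - f (l + 1)) = f (-N) - f (N + 1) := by
    rw [sum_Icc_eq_sum_Ico_add _ (by omega), sum_Ico_int_sub, sub_add_sub_cancel]
  have ends_tendsto {g : ℕ → ℤ} (hg : g.Injective) : Tendsto (f ∘ g) atTop (𝓝 0) :=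
    hf.comp (Nat.cofinite_eq_atTop ▸ hg.tendsto_cofinite)
  simp only [hasSum_symmetricIcc_iff, telescope]
  simpa using (ends_tendsto (g := fun N ↦ -N) fun _ _ h ↦ by simpa using h).sub
    (ends_tendsto (g := fun N ↦ N + 1) fun _ _ h ↦ by simpa using h)

theorem hasSum_symmetricIcc_shift (hf : Tendsto f cofinite (𝓝 0)) {a : E}
    (h : HasSum f a (symmetricIcc ℤ)) (m : ℤ) :
    HasSum (fun l ↦ f (l + m)) a (symmetricIcc ℤ) := by
  have step (k : ℤ) : HasSum (fun l ↦ f (l + k) - f (l + (k + 1))) 0 (symmetricIcc ℤ) := by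
    simpa only [Function.comp_def, add_assoc, add_comm 1 k] using
      hasSum_symmetricIcc_sub_shift_one (hf.comp (add_left_injective k).tendsto_cofinite)
  induction m with
  | zero => simpa using h
  | succ k ih => simpa using ih.sub (step k)
  | pred k ih => simpa using ih.add (step (-k - 1))

end SymmetricSums

section TwoSidedSums

theorem tendsto_zpow_mul_poleTerm {x : ℂ} (hx : ‖x‖ = 1) (j : ℕ) :
    Tendsto (fun l : ℤ ↦ x ^ l * poleTerm (l : ℂ) j) cofinite (𝓝 0) := by
  rcases eq_or_ne j 0 with rfl | hj
  · refine tendsto_const_nhds.congr' ?_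
    filter_upwards [(Set.finite_singleton (0 : ℤ)).compl_mem_cofinite] with l hl
    simp_all [poleTerm]
  · have hinv : Tendsto (fun l : ℤ ↦ ‖(l : ℂ)⁻¹‖ ^ j) cofinite (𝓝 0) := by
      have := tendsto_inv₀_cobounded.comp (tendsto_intCast_atBot_sup_atTop_cobounded (α := ℂ))
      simpa [hj, Int.cofinite_eq] using this.norm.pow j
    refine tendsto_zero_iff_norm_tendsto_zero.2 (hinv.congr fun l ↦ ?_)
    simp [poleTerm, hj, norm_zpow, hx]

theorem hasSum_principalPart {K ι : Type*} [Field K] [TopologicalSpace K] [IsTopologicalSemiring K]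
    {F : SummationFilter ι} {u : ι → ℕ → K} {U : ℕ → K}
    (h : ∀ j, HasSum (fun l ↦ u l j) (U j) F) (d : K) (p q : ℕ) :
    HasSum (fun l ↦ principalPart (u l) d p q) (principalPart U d p q) F :=
  hasSum_sum fun i _ ↦ ((h (p - i)).mul_left _).div_const _

theorem hasSum_symmetricIcc_zpow_div {x : ℂ} (hx : ‖x‖ = 1) {E : ℕ → ℂ}
    (hE : ∀ j, HasSum (fun l : ℤ ↦ x ^ l * poleTerm (l : ℂ) j) (E j) (symmetricIcc ℤ))
    {m : ℤ} (hm : m ≠ 0) {p q : ℕ} (hp : p ≠ 0) (hq : q ≠ 0) :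
    HasSum (fun l : ℤ ↦ x ^ l / ((l : ℂ) ^ p * ((l + m : ℤ) : ℂ) ^ q))
      (principalPart E m p q + x ^ (-m) * principalPart E (-m) q p) (symmetricIcc ℤ) := by
  have hx0 : x ≠ 0 := norm_ne_zero_iff.1 (by simp [hx])
  have hE_shift (j : ℕ) : HasSum (fun l : ℤ ↦ x ^ l * poleTerm ((l + m : ℤ) : ℂ) j)
      (x ^ (-m) * E j) (symmetricIcc ℤ) := by
    refine ((hasSum_symmetricIcc_shift (tendsto_zpow_mul_poleTerm hx j) (hE j) m).mul_left
      (x ^ (-m))).congr_fun fun l ↦ ?_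
    rw [← mul_assoc, ← zpow_add₀ hx0, neg_add_cancel_comm_assoc]
  have hsum := (hasSum_principalPart hE m p q).add (hasSum_principalPart hE_shift (-m) q p)
  rw [mul_principalPart]
  refine hsum.congr_fun fun l ↦ ?_
  have hlm : (l : ℂ) ≠ ((l + m : ℤ) : ℂ) := by simpa using hm
  rw [← mul_principalPart, ← mul_principalPart, div_eq_mul_one_div,
    one_div_pow_mul_pow_eq_principalPart_add hlm hp hq]
  push_cast
  rw [add_sub_cancel_left, sub_add_cancel_left, mul_add]

end TwoSidedSums

section AlternatingSums

theorem hasSum_neg_one_pow_div_cpow {s : ℂ} (hs : 1 < s.re) :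
    HasSum (fun n : ℕ ↦ (-1 : ℂ) ^ n / (n : ℂ) ^ s) (phi s) := by
  have hzeta : HasSum (fun n : ℕ ↦ 1 / (n : ℂ) ^ s) (riemannZeta s) :=
    zeta_eq_tsum_one_div_nat_cpow hs ▸ (summable_one_div_nat_cpow.2 hs).hasSum
  have heven : HasSum (fun n : ℕ ↦ (1 + (-1 : ℂ) ^ n) / (n : ℂ) ^ s)
      (2 ^ (1 - s) * riemannZeta s) := by
    rw [← (mul_right_injective₀ (two_ne_zero (α := ℕ))).hasSum_iff]
    · refine (hzeta.mul_left _).congr_fun fun n ↦ ?_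
      rw [Function.comp_apply, (even_two_mul n).neg_one_pow, one_add_one_eq_two, Nat.cast_mul,
        natCast_mul_natCast_cpow, cpow_sub _ _ two_ne_zero, cpow_one, Nat.cast_ofNat,
        div_mul_div_comm, mul_one]
    · intro n hn
      have hodd : Odd n := Nat.not_even_iff_odd.1 fun ⟨r, hr⟩ ↦ hn ⟨r, by simp [hr, two_mul]⟩
      simp [hodd.neg_one_pow]
  rw [phi, sub_one_mul]
  exact (heven.sub hzeta).congr_fun fun n ↦ by ring

/-- The sum of `(-1) ^ l / l ^ j` over `l ≠ 0`, regularised to `-1 = 2 * phi 0` for `j = 0`. -/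
noncomputable def altSum (j : ℕ) : ℂ :=
  if Even j then 2 * phi j else 0

theorem neg_one_pow_mul_altSum (j : ℕ) : (-1) ^ j * altSum j = altSum j := by
  rw [altSum]
  split_ifs with hj <;> simp [hj]

theorem altSum_zero : altSum 0 = -1 := by
  norm_num [altSum, phi, riemannZeta_zero]

theorem hasSum_symmetricIcc_altSum (j : ℕ) :
    HasSum (fun l : ℤ ↦ (-1) ^ l * poleTerm (l : ℂ) j) (altSum j) (symmetricIcc ℤ) := by
  rcases eq_or_ne j 0 with rfl | hj
  · rw [altSum_zero]
    refine (hasSum_ite_eq (0 : ℤ) (-1 : ℂ) (symmetricIcc ℤ)).congr_fun fun l ↦ ?_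
    by_cases hl : l = 0 <;> simp [poleTerm, hl]
  rcases Nat.even_or_odd j with heven | hodd
  · have hnat : HasSum (fun n : ℕ ↦ (-1 : ℂ) ^ (n : ℤ) * poleTerm ((n : ℤ) : ℂ) j) (phi j) := by
      have hj1 : 1 < (j : ℂ).re := by
        obtain ⟨k, rfl⟩ := heven
        rw [natCast_re, Nat.one_lt_cast]
        omega
      refine (hasSum_neg_one_pow_div_cpow hj1).congr_fun fun n ↦ ?_
      simp [poleTerm, hj, div_eq_mul_inv]
    have hneg : HasSum (fun n : ℕ ↦ (-1 : ℂ) ^ (-n : ℤ) * poleTerm ((-n : ℤ) : ℂ) j) (phi j) :=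
      hnat.congr_fun fun n ↦ by simp [poleTerm, hj, heven.neg_pow, ← inv_pow, inv_neg]
    have hsum : HasSum (fun l : ℤ ↦ (-1) ^ l * poleTerm (l : ℂ) j) (2 * phi j) := by
      simpa [poleTerm, hj, two_mul] using HasSum.of_nat_of_neg
        (f := fun l : ℤ ↦ (-1) ^ l * poleTerm (l : ℂ) j) hnat hneg
    rw [altSum, if_pos heven]
    exact hsum.mono_left le_atTop
  · rw [altSum, if_neg (Nat.not_even_iff_odd.2 hodd)]
    refine hasSum_symmetricIcc_of_odd fun l ↦ ?_
    simp [poleTerm, hj, hodd.neg_pow, ← inv_zpow, inv_neg]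

end AlternatingSums

section Polylog

/-- The polylogarithm `Li_s(y) = ∑ y ^ m / m ^ s`, `m ≥ 1`, of which `phiQuarter` and
`phiNegQuarter` are the values at `y = I` and `y = -I`. -/
noncomputable def polylog (s y : ℂ) : ℂ :=
  ∑' m : ℕ, y ^ (m + 1) / ((m + 1 : ℕ) : ℂ) ^ s

theorem norm_pow_div_natCast_cpow_le {y : ℂ} (hy : ‖y‖ ≤ 1) (s : ℂ) (m : ℕ) :
    ‖y ^ (m + 1) / ((m + 1 : ℕ) : ℂ) ^ s‖ ≤ 1 / ((m + 1 : ℕ) : ℝ) ^ s.re := by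
  rw [norm_div, norm_pow, norm_natCast_cpow_of_pos m.succ_pos]
  gcongr
  exact pow_le_one₀ (norm_nonneg y) hy

theorem summable_one_div_succ_rpow {r : ℝ} (hr : 1 < r) :
    Summable fun m : ℕ ↦ 1 / ((m + 1 : ℕ) : ℝ) ^ r :=
  (summable_nat_add_iff 1).2 (Real.summable_one_div_nat_rpow.2 hr)

theorem hasSum_polylog {y : ℂ} (hy : ‖y‖ ≤ 1) {s : ℂ} (hs : 1 < s.re) :
    HasSum (fun m : ℕ ↦ y ^ (m + 1) / ((m + 1 : ℕ) : ℂ) ^ s) (polylog s y) :=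
  (Summable.of_norm_bounded (summable_one_div_succ_rpow hs)
    (norm_pow_div_natCast_cpow_le hy s)).hasSum

/-- `principalPart u m p q` summed against `y ^ m / m ^ s`: each `1 / m ^ (q + i)` becomes
`polylog (s + q + i) y`. -/
noncomputable def polylogPrincipalPart (u : ℕ → ℂ) (y s : ℂ) (p q : ℕ) : ℂ :=
  ∑ i ∈ range (p + 1), (-1) ^ i * (Nat.multichoose q i : ℂ) * u (p - i) * polylog (s + q + i) y

theorem hasSum_mul_principalPart (u : ℕ → ℂ) {y : ℂ} (hy : ‖y‖ ≤ 1) {s : ℂ} (hs : 1 < s.re)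
    (p q : ℕ) :
    HasSum (fun m : ℕ ↦
        y ^ (m + 1) / ((m + 1 : ℕ) : ℂ) ^ s * principalPart u ((m + 1 : ℕ) : ℂ) p q)
      (polylogPrincipalPart u y s p q) := by
  simp only [principalPart, mul_sum]
  refine hasSum_sum fun i _ ↦ ?_
  have hsi : 1 < (s + q + i).re := by
    simp only [add_re, natCast_re]
    linarith [q.cast_nonneg (α := ℝ), i.cast_nonneg (α := ℝ)]
  refine ((hasSum_polylog hy hsi).mul_left _).congr_fun fun m ↦ ?_
  rw [cpow_add _ _ (Nat.cast_ne_zero.2 m.succ_ne_zero),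
    cpow_add _ _ (Nat.cast_ne_zero.2 m.succ_ne_zero), cpow_natCast, cpow_natCast, pow_add]
  ring

end Polylog

section Tornheim

theorem norm_one_div_intCast_pow_mul_pow_le (a b : ℤ) {p q : ℕ} (hp : p ≠ 0) (hq : q ≠ 0) :
    ‖1 / ((a : ℂ) ^ p * (b : ℂ) ^ q)‖ ≤ 1 / (a : ℝ) ^ 2 + 1 / (b : ℝ) ^ 2 := by
  have inv_pow_le (a : ℤ) {p : ℕ} (hp : p ≠ 0) : |(a : ℝ)|⁻¹ ^ p ≤ |(a : ℝ)|⁻¹ := by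
    refine pow_le_of_le_one (by positivity) ?_ hp
    simpa using Nat.cast_inv_le_one (α := ℝ) a.natAbs
  calc ‖1 / ((a : ℂ) ^ p * (b : ℂ) ^ q)‖ = |(a : ℝ)|⁻¹ ^ p * |(b : ℝ)|⁻¹ ^ q := by
        simp [mul_comm]
    _ ≤ |(a : ℝ)|⁻¹ * |(b : ℝ)|⁻¹ := by
        gcongr
        exacts [inv_pow_le a hp, inv_pow_le b hq]
    _ ≤ |(a : ℝ)|⁻¹ ^ 2 + |(b : ℝ)|⁻¹ ^ 2 := by
        nlinarith [sq_nonneg (|(a : ℝ)|⁻¹ - |(b : ℝ)|⁻¹), sq_nonneg (|(a : ℝ)|⁻¹ + |(b : ℝ)|⁻¹)]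
    _ = 1 / (a : ℝ) ^ 2 + 1 / (b : ℝ) ^ 2 := by simp

theorem norm_zpow_div_intCast_pow_mul_pow_le {x : ℂ} (hx : ‖x‖ = 1) (l m : ℤ) {p q : ℕ}
    (hp : p ≠ 0) (hq : q ≠ 0) :
    ‖x ^ l / ((l : ℂ) ^ p * ((l + m : ℤ) : ℂ) ^ q)‖ ≤
      1 / (l : ℝ) ^ 2 + 1 / ((l + m : ℤ) : ℝ) ^ 2 := by
  rw [div_eq_mul_one_div, norm_mul, norm_zpow, hx, one_zpow, one_mul]
  exact norm_one_div_intCast_pow_mul_pow_le _ _ hp hq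

theorem tsum_zpow_div {x : ℂ} (hx : ‖x‖ = 1) {E : ℕ → ℂ}
    (hE : ∀ j, HasSum (fun l : ℤ ↦ x ^ l * poleTerm (l : ℂ) j) (E j) (symmetricIcc ℤ))
    {m : ℤ} (hm : m ≠ 0) {p q : ℕ} (hp : p ≠ 0) (hq : q ≠ 0) :
    ∑' l : ℤ, x ^ l / ((l : ℂ) ^ p * ((l + m : ℤ) : ℂ) ^ q) =
      principalPart E m p q + x ^ (-m) * principalPart E (-m) q p := by
  have h₀ : Summable fun l : ℤ ↦ 1 / (l : ℝ) ^ 2 := Real.summable_one_div_int_pow.2 one_lt_two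
  have h₁ : Summable fun l : ℤ ↦ 1 / ((l + m : ℤ) : ℝ) ^ 2 :=
    h₀.comp_injective (add_left_injective m)
  have hs := Summable.of_norm_bounded (h₀.add h₁) fun l ↦
    norm_zpow_div_intCast_pow_mul_pow_le hx l m hp hq
  exact HasSum.unique (hs.hasSum.mono_left le_atTop)
    (hasSum_symmetricIcc_zpow_div hx hE hm hp hq)

/-- The summand of `T`: the condition `l ≠ 0`, `l + m ≠ 0` is enforced by `1 / 0 = 0`, and `m`
is shifted by one. -/
noncomputable def tornheimTerm (p : ℕ) (s : ℂ) (q : ℕ) (x y : ℂ) (l : ℤ) (m : ℕ) : ℂ :=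
  y ^ (m + 1) / ((m + 1 : ℕ) : ℂ) ^ s *
    (x ^ l / ((l : ℂ) ^ p * ((l + (m + 1 : ℕ) : ℤ) : ℂ) ^ q))

theorem T_eq_tsum_tornheimTerm {p q : ℕ} (hp : p ≠ 0) (hq : q ≠ 0) (s x y : ℂ) :
    T p s q x y = ∑' lm : ℤ × ℕ, tornheimTerm p s q x y lm.1 lm.2 := by
  refine tsum_congr fun ⟨l, m⟩ ↦ ?_
  rw [tornheimTerm, Nat.cast_succ (R := ℤ), ← add_assoc]
  split_ifs with h
  · rw [div_mul_div_comm]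
    ring
  · simp only [not_and_or, not_not] at h
    rcases h with rfl | hlm
    · simp [hp]
    · simp only [hlm, Int.cast_zero, zero_pow hq, mul_zero, div_zero]

theorem summable_tornheimTerm {p q : ℕ} (hp : p ≠ 0) (hq : q ≠ 0) {s x y : ℂ} (hs : 1 < s.re)
    (hx : ‖x‖ = 1) (hy : ‖y‖ ≤ 1) :
    Summable fun lm : ℤ × ℕ ↦ tornheimTerm p s q x y lm.1 lm.2 := by
  have hsq : Summable fun lm : ℤ × ℕ ↦
      1 / ((lm.2 + 1 : ℕ) : ℝ) ^ s.re * (1 / (lm.1 : ℝ) ^ 2) := by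
    have := (Real.summable_one_div_int_pow.2 one_lt_two).mul_of_nonneg
      (summable_one_div_succ_rpow hs) (fun l ↦ by positivity) (fun m ↦ by positivity)
    exact this.congr fun lm ↦ mul_comm _ _
  have hsq_shift : Summable fun lm : ℤ × ℕ ↦
      1 / ((lm.2 + 1 : ℕ) : ℝ) ^ s.re * (1 / ((lm.1 + (lm.2 + 1 : ℕ) : ℤ) : ℝ) ^ 2) := by
    refine hsq.comp_injective (i := fun lm : ℤ × ℕ ↦ (lm.1 + (lm.2 + 1 : ℕ), lm.2)) ?_
    rintro ⟨l, m⟩ ⟨l', m'⟩ h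
    simp only [Prod.mk.injEq] at h
    grind
  refine Summable.of_norm_bounded (hsq.add hsq_shift) fun ⟨l, m⟩ ↦ ?_
  rw [tornheimTerm, norm_mul, ← mul_add]
  exact mul_le_mul (norm_pow_div_natCast_cpow_le hy s m)
    (norm_zpow_div_intCast_pow_mul_pow_le hx l _ hp hq) (norm_nonneg _) (by positivity)

theorem tsum_tornheimTerm {p q : ℕ} (hp : p ≠ 0) (hq : q ≠ 0) (s : ℂ) {x : ℂ} (hx : ‖x‖ = 1)
    (y : ℂ) {E : ℕ → ℂ}
    (hE : ∀ j, HasSum (fun l : ℤ ↦ x ^ l * poleTerm (l : ℂ) j) (E j) (symmetricIcc ℤ)) (m : ℕ) :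
    ∑' l : ℤ, tornheimTerm p s q x y l m =
      y ^ (m + 1) / ((m + 1 : ℕ) : ℂ) ^ s * principalPart E ((m + 1 : ℕ) : ℂ) p q +
        (-1) ^ (p + q) * ((x⁻¹ * y) ^ (m + 1) / ((m + 1 : ℕ) : ℂ) ^ s *
          principalPart (fun j ↦ (-1) ^ j * E j) ((m + 1 : ℕ) : ℂ) q p) := by
  simp only [tornheimTerm]
  rw [tsum_mul_left, tsum_zpow_div hx hE (Nat.cast_ne_zero.2 m.add_one_ne_zero) hp hq,
    Int.cast_natCast, principalPart_neg, zpow_neg, zpow_natCast, mul_pow, inv_pow, add_comm q p]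
  ring

theorem T_eq_polylogPrincipalPart_add {p q : ℕ} (hp : p ≠ 0) (hq : q ≠ 0) {s x y : ℂ}
    (hs : 1 < s.re) (hx : ‖x‖ = 1) (hy : ‖y‖ ≤ 1) {E : ℕ → ℂ}
    (hE : ∀ j, HasSum (fun l : ℤ ↦ x ^ l * poleTerm (l : ℂ) j) (E j) (symmetricIcc ℤ)) :
    T p s q x y = polylogPrincipalPart E y s p q +
      (-1) ^ (p + q) * polylogPrincipalPart (fun j ↦ (-1) ^ j * E j) (x⁻¹ * y) s q p := by
  have hxy : ‖x⁻¹ * y‖ ≤ 1 := by simpa [hx] using hy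
  have hsum := (summable_tornheimTerm hp hq hs hx hy).prod_symm
  rw [T_eq_tsum_tornheimTerm hp hq, ← (Equiv.prodComm ℕ ℤ).tsum_eq]
  calc ∑' ml : ℕ × ℤ, tornheimTerm p s q x y ml.2 ml.1
    _ = ∑' m : ℕ, ∑' l : ℤ, tornheimTerm p s q x y l m := hsum.tsum_prod
    _ = _ := by
      simp only [tsum_tornheimTerm hp hq s hx y hE]
      exact ((hasSum_mul_principalPart E hy hs p q).add
        ((hasSum_mul_principalPart _ hxy hs q p).mul_left _)).tsum_eq

end Tornheim

section AlternatingTornheim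

theorem sum_range_ite_even {M : Type*} [AddCommMonoid M] (f : ℕ → M) (n : ℕ) :
    ∑ j ∈ range (n + 1), (if Even j then f j else 0) = ∑ k ∈ range (n / 2 + 1), f (2 * k) := by
  have filter_even : (range (n + 1)).filter Even = (range (n / 2 + 1)).image (2 * ·) := by
    ext j
    simp only [mem_filter, mem_range, mem_image]
    constructor
    · rintro ⟨hj, r, rfl⟩
      exact ⟨r, by omega, by omega⟩
    · rintro ⟨k, hk, rfl⟩
      exact ⟨by omega, even_two_mul k⟩
  rw [← sum_filter, filter_even, sum_image fun a _ b _ h ↦ by simpa using h]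

theorem polylogPrincipalPart_altSum (y s : ℂ) (p : ℕ) {q : ℕ} (hq : q ≠ 0) :
    polylogPrincipalPart altSum y s p q =
      2 * (-1) ^ p * ∑ k ∈ range (p / 2 + 1), phi (2 * k) *
        (Nat.choose (p + q - 1 - 2 * k) (q - 1) : ℂ) * polylog (s + p + q - 2 * k) y := by
  have term_reflect (j : ℕ) (hj : j ∈ range (p + 1)) :
      (-1) ^ (p - j) * (Nat.multichoose q (p - j) : ℂ) * altSum (p - (p - j)) *
          polylog (s + q + (p - j : ℕ)) y =
        if Even j then 2 * (-1) ^ p * (phi j * (Nat.choose (p + q - 1 - j) (q - 1) : ℂ) *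
          polylog (s + p + q - j) y) else 0 := by
    have hjp : j ≤ p := mem_range_succ_iff.mp hj
    have hchoose : Nat.multichoose q (p - j) = Nat.choose (p + q - 1 - j) (q - 1) := by
      rw [Nat.multichoose_eq, show q + (p - j) - 1 = p + q - 1 - j by omega]
      exact Nat.choose_symm_of_eq_add (by omega)
    have hpolylog : s + q + (p - j : ℕ) = s + p + q - j := by
      push_cast [hjp]
      ring
    rw [Nat.sub_sub_self hjp, hchoose, hpolylog, altSum]
    split_ifs with heven
    · have hsign : (-1 : ℂ) ^ (p - j) = (-1) ^ p := by
        rw [neg_one_pow_congr]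
        grind
      rw [hsign]
      ring
    · simp
  rw [polylogPrincipalPart, ← sum_flip, sum_congr rfl term_reflect, sum_range_ite_even, mul_sum]
  simp only [Nat.cast_mul, Nat.cast_ofNat]

theorem T_eval_negone_I_general {p q : ℕ} (hp : p ≠ 0) (hq : q ≠ 0) {s y : ℂ} (hs : 1 < s.re)
    (hy : ‖y‖ ≤ 1) :
    T p s q (-1) y =
      2 * (-1) ^ p * ∑ k ∈ range (p / 2 + 1), phi (2 * k) *
        (Nat.choose (p + q - 1 - 2 * k) (q - 1) : ℂ) * polylog (s + p + q - 2 * k) y +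
      2 * (-1) ^ p * ∑ k ∈ range (q / 2 + 1), phi (2 * k) *
        (Nat.choose (p + q - 1 - 2 * k) (p - 1) : ℂ) * polylog (s + p + q - 2 * k) (-y) := by
  have hsign : (-1 : ℂ) ^ (p + q) * (-1) ^ q = (-1) ^ p := by
    rw [← pow_add, neg_one_pow_congr]
    grind
  rw [T_eq_polylogPrincipalPart_add hp hq hs (by simp) hy hasSum_symmetricIcc_altSum]
  simp only [neg_one_pow_mul_altSum, polylogPrincipalPart_altSum _ _ _ hp,
    polylogPrincipalPart_altSum _ _ _ hq, inv_neg_one, neg_one_mul, add_comm q p,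
    add_right_comm s (q : ℂ)]
  rw [← hsign]
  ring

end AlternatingTornheim

/-- Evaluation of `T(p,s,q;-1,i)` in terms of `φ` and Lerch values
(Lemma 6.2, first formula, of Komori–Matsumoto–Tsumura). -/
theorem T_eval_negone_I (p q : ℕ) (hp : 0 < p) (hq : 0 < q) (s : ℝ) (hs : 1 < s) :
    T p (s : ℂ) q (-1) Complex.I =
      2 * (-1 : ℂ) ^ p * ∑ k ∈ range (p / 2 + 1), phi (2 * k) *
          (Nat.choose (p + q - 1 - 2 * k) (q - 1) : ℂ) *
          phiQuarter ((s : ℂ) + p + q - 2 * k) +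
      2 * (-1 : ℂ) ^ p * ∑ k ∈ range (q / 2 + 1), phi (2 * k) *
          (Nat.choose (p + q - 1 - 2 * k) (p - 1) : ℂ) *
          phiNegQuarter ((s : ℂ) + p + q - 2 * k) := by
  exact T_eval_negone_I_general hp.ne' hq.ne' (by simpa using hs) norm_I.le
end
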